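/- Fix β > 0, R > 0 and C > 0. Then there exist positive constants c = c(C, R, β) and N = N(C, R, β) with the following property. Let n ≥ N, let x₀ ∈ [0,1], let (Ω, 𝓐) be a measurable space and (P_f : f ∈ 𝒞^β(R)) a family of probability measures on (Ω, 𝓐) whose squared Hellinger distances satisfy H(P_f, P_g)² = 1 − exp(−(n/8)·‖f − g‖_{L²([0,1])}²) for all f, g ∈ 𝒞^β(R), and let T : Ω → ℝ be any measurable estimator of f(x₀) that is integrable under every P_f. If sup_{f ∈ 𝒞^β(R)} |E_{P_f}[T] − f(x₀)| < (C/n)^{β/(2β+1)}, then sup_{f ∈ 𝒞^β(R)} E_{P_f}[|T − E_{P_f}[T]|] ≥ c·n^{−β/(2β+1)}. -/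

import Mathlib

open MeasureTheory ENNReal

/-- The squared Hellinger distance `H(P,Q)²` between two measures on the same
measurable space, defined via the densities with respect to the dominating measure `P + Q`. -/
noncomputable def sqHellinger {Ω : Type*} [MeasurableSpace Ω] (P Q : Measure Ω) : ℝ :=
  (1 / 2) * ∫ ω, (Real.sqrt ((P.rnDeriv (P + Q) ω).toReal)
    - Real.sqrt ((Q.rnDeriv (P + Q) ω).toReal)) ^ 2 ∂(P + Q)

/-- `⌊β⌋`: the largest integer strictly smaller than `β` (for `β > 0`). -/
noncomputable def lfloor (β : ℝ) : ℕ := ⌈β⌉₊ - 1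

/-- The `β`-Hölder norm of `f` on the domain `[0,1]`, valued in `ℝ≥0∞`:
the sum over `ℓ = 0, …, ⌊β⌋` of the sup-norms of the `ℓ`-th derivatives plus the
`(β - ⌊β⌋)`-Hölder seminorm of the `⌊β⌋`-th derivative. -/
noncomputable def holderNorm (β : ℝ) (f : ℝ → ℝ) : ℝ≥0∞ :=
  (∑ l ∈ Finset.range (lfloor β + 1),
      ⨆ x : Set.Icc (0:ℝ) 1, ENNReal.ofReal |iteratedDerivWithin l f (Set.Icc 0 1) x|)
    + ⨆ p : {y : Set.Icc (0:ℝ) 1 × Set.Icc (0:ℝ) 1 // (y.1 : ℝ) ≠ (y.2 : ℝ)},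
        ENNReal.ofReal
          (|iteratedDerivWithin (lfloor β) f (Set.Icc 0 1) p.1.1
              - iteratedDerivWithin (lfloor β) f (Set.Icc 0 1) p.1.2|
            / |(p.1.1 : ℝ) - (p.1.2 : ℝ)| ^ (β - (lfloor β : ℝ)))

/-- The ball `𝒞^β(R)` of `β`-Hölder smooth functions on `[0,1]` with radius `R`. -/
def holderBall (β R : ℝ) : Set (ℝ → ℝ) :=
  {f | ContDiffOn ℝ (lfloor β) f (Set.Icc 0 1) ∧ holderNorm β f ≤ ENNReal.ofReal R}

lemma scaled_iteratedDeriv (φ : ℝ → ℝ) (hφ : ContDiff ℝ (⊤ : ℕ∞) φ) (a b x₀ x : ℝ) (l : ℕ) :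
    iteratedDeriv l (fun x => a * φ (b * (x - x₀))) x
      = a * b ^ l * iteratedDeriv l φ (b * (x - x₀)) := by
  have h1 : ContDiff ℝ l φ := hφ.of_le (by exact_mod_cast le_top)
  rw [iteratedDeriv_const_mul_field a (fun x => φ (b * (x - x₀)))]
  have h2 := congrFun (iteratedDeriv_comp_sub_const l (fun y => φ (b * y)) x₀) x
  have h3 := congrFun (iteratedDeriv_comp_const_mul h1 b) (x - x₀)
  rw [h2]
  refine (congrArg (a * ·) h3).trans ?_
  ring

lemma deriv_bound (φ : ℝ → ℝ) (hφ : ContDiff ℝ (⊤ : ℕ∞) φ) (hs : HasCompactSupport φ) (k : ℕ) :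
    ∃ M : ℝ, 0 < M ∧ ∀ l ≤ k, ∀ x, |iteratedDeriv l φ x| ≤ M := by
  have h1 : ∀ l : ℕ, ∃ M : ℝ, ∀ x, |iteratedDeriv l φ x| ≤ M := by
    intro l
    have hc : Continuous (iteratedFDeriv ℝ l φ) :=
      hφ.continuous_iteratedFDeriv (by exact_mod_cast le_top)
    obtain ⟨M, hM⟩ := (hs.iteratedFDeriv (𝕜 := ℝ) l).exists_bound_of_continuous hc
    refine ⟨M, fun x => ?_⟩
    rw [← Real.norm_eq_abs, ← norm_iteratedFDeriv_eq_norm_iteratedDeriv]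
    exact hM x
  choose M hM using h1
  have hM0 : ∀ l, 0 ≤ M l := fun l => (abs_nonneg _).trans (hM l 0)
  refine ⟨1 + ∑ l ∈ Finset.range (k + 1), M l, ?_, ?_⟩
  · have := Finset.sum_nonneg (s := Finset.range (k + 1)) (fun l _ => hM0 l)
    linarith
  · intro l hl x
    have := Finset.single_le_sum (s := Finset.range (k + 1)) (fun l _ => hM0 l)
      (Finset.mem_range.2 (Nat.lt_succ_of_le hl))
    linarith [hM l x]

lemma holder_of_bounds (ψ : ℝ → ℝ) (M γ : ℝ) (hγ : 0 < γ) (hγ1 : γ ≤ 1)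
    (hd : Differentiable ℝ ψ) (h0 : ∀ x, |ψ x| ≤ M) (h1 : ∀ x, |deriv ψ x| ≤ M) (x y : ℝ) :
    |ψ x - ψ y| ≤ 2 * M * |x - y| ^ γ := by
  have hM : 0 ≤ M := (abs_nonneg _).trans (h0 0)
  rcases le_total |x - y| 1 with h | h
  · have h2 := Convex.norm_image_sub_le_of_norm_deriv_le (f := ψ) (s := Set.univ) (C := M)
      (fun x _ => hd x) (fun x _ => h1 x) convex_univ (Set.mem_univ y) (Set.mem_univ x)
    rw [Real.norm_eq_abs, Real.norm_eq_abs] at h2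
    have h3 : |x - y| ≤ |x - y| ^ γ := by
      rcases (abs_nonneg (x - y)).eq_or_lt with h4 | h4
      · rw [← h4, Real.zero_rpow hγ.ne']
      · simpa using Real.rpow_le_rpow_of_exponent_ge h4 h hγ1
    nlinarith [mul_le_mul_of_nonneg_left h3 hM, mul_nonneg hM (abs_nonneg (x - y))]
  · have h3 : 1 ≤ |x - y| ^ γ := Real.one_le_rpow h hγ.le
    have h4 : |ψ x - ψ y| ≤ 2 * M := by
      have := abs_sub (ψ x) (ψ y)
      linarith [h0 x, h0 y]
    nlinarith

lemma mem_ball (β R : ℝ) (hβ : 0 < β) (hR : 0 < R) (φ : ℝ → ℝ)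
    (hφ : ContDiff ℝ (⊤ : ℕ∞) φ) (hs : HasCompactSupport φ) :
    ∃ ε : ℝ, 0 < ε ∧ ∀ s : ℝ, |s| ≤ ε → ∀ h : ℝ, 0 < h → h ≤ 1 → ∀ x₀ : ℝ,
      (fun x => (h ^ β * s) * φ (h⁻¹ * (x - x₀))) ∈ holderBall β R := by
  set k := lfloor β with hk
  have hkβ : (k : ℝ) < β ∧ β ≤ k + 1 := by
    have h1 : 0 < ⌈β⌉₊ := Nat.ceil_pos.2 hβ
    have h2 : k + 1 = ⌈β⌉₊ := by rw [hk, lfloor]; omega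
    constructor
    · exact Nat.lt_ceil.1 (by omega)
    · have := Nat.le_ceil β
      rw [← h2] at this
      exact_mod_cast this
  obtain ⟨M, hM, hMb⟩ := deriv_bound φ hφ hs (k + 1)
  have hk3 : (0 : ℝ) < k + 3 := by positivity
  refine ⟨R / ((k + 3) * M), by positivity, ?_⟩
  intro s hsε h hh hh1 x₀
  have hsM : (k + 3) * (|s| * M) ≤ R := by
    rw [le_div_iff₀ (by positivity)] at hsε
    linarith
  have hsm : ContDiff ℝ (⊤ : ℕ∞) (fun x => (h ^ β * s) * φ (h⁻¹ * (x - x₀))) := by fun_prop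
  have hit : ∀ l : ℕ, ∀ x ∈ Set.Icc (0:ℝ) 1,
      iteratedDerivWithin l (fun x => (h ^ β * s) * φ (h⁻¹ * (x - x₀))) (Set.Icc 0 1) x
        = h ^ (β - l) * s * iteratedDeriv l φ (h⁻¹ * (x - x₀)) := by
    intro l x hx
    rw [iteratedDerivWithin_eq_iteratedDeriv (uniqueDiffOn_Icc zero_lt_one)
      ((hsm.of_le (by exact_mod_cast le_top)).contDiffAt) hx, scaled_iteratedDeriv φ hφ,
      Real.rpow_sub hh, Real.rpow_natCast, inv_pow]
    field_simp
  refine ⟨(hsm.of_le (by exact_mod_cast le_top)).contDiffOn, ?_⟩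
  have hA : ∀ l ∈ Finset.range (k + 1),
      (⨆ x : Set.Icc (0:ℝ) 1, ENNReal.ofReal |iteratedDerivWithin l
        (fun x => (h ^ β * s) * φ (h⁻¹ * (x - x₀))) (Set.Icc 0 1) x|)
        ≤ ENNReal.ofReal (|s| * M) := by
    intro l hl
    refine iSup_le fun x => ENNReal.ofReal_le_ofReal ?_
    have hl' : l ≤ k := Nat.lt_succ_iff.1 (Finset.mem_range.1 hl)
    have hl2 : (l : ℝ) ≤ k := by exact_mod_cast hl'
    rw [hit l x x.2, abs_mul, abs_mul]
    have e1 : |h ^ (β - l)| ≤ 1 := by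
      rw [abs_of_nonneg (by positivity)]
      exact Real.rpow_le_one hh.le hh1 (by linarith)
    have e2 := hMb l (by omega) (h⁻¹ * (x - x₀))
    calc |h ^ (β - l)| * |s| * |iteratedDeriv l φ (h⁻¹ * (x - x₀))| ≤ 1 * |s| * M := by gcongr
      _ = |s| * M := by ring
  have hB : (⨆ p : {y : Set.Icc (0:ℝ) 1 × Set.Icc (0:ℝ) 1 // (y.1 : ℝ) ≠ (y.2 : ℝ)},
        ENNReal.ofReal
          (|iteratedDerivWithin k (fun x => (h ^ β * s) * φ (h⁻¹ * (x - x₀))) (Set.Icc 0 1) p.1.1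
              - iteratedDerivWithin k (fun x => (h ^ β * s) * φ (h⁻¹ * (x - x₀)))
                (Set.Icc 0 1) p.1.2|
            / |(p.1.1 : ℝ) - (p.1.2 : ℝ)| ^ (β - (k : ℝ)))) ≤ ENNReal.ofReal (2 * (|s| * M)) := by
    refine iSup_le fun p => ENNReal.ofReal_le_ofReal ?_
    obtain ⟨⟨⟨x, hx⟩, ⟨y, hy⟩⟩, hxy⟩ := p
    simp only at hxy ⊢
    have hpos : 0 < |x - y| := abs_pos.2 (sub_ne_zero.2 hxy)
    rw [hit k x hx, hit k y hy, div_le_iff₀ (by positivity), ← mul_sub, abs_mul, abs_mul,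
      abs_of_nonneg (by positivity : 0 ≤ h ^ (β - k))]
    have hd : Differentiable ℝ (iteratedDeriv k φ) :=
      hφ.differentiable_iteratedDeriv k (by exact_mod_cast ENat.natCast_lt_top k)
    have e := holder_of_bounds (iteratedDeriv k φ) M (β - k) (by linarith [hkβ.1])
      (by linarith [hkβ.2]) hd (hMb k (by omega))
      (by intro z; rw [← iteratedDeriv_succ]; exact hMb (k + 1) le_rfl z)
      (h⁻¹ * (x - x₀)) (h⁻¹ * (y - x₀))
    have e3 : |h⁻¹ * (x - x₀) - h⁻¹ * (y - x₀)| ^ (β - k)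
        = (h ^ (β - k))⁻¹ * |x - y| ^ (β - k) := by
      rw [← mul_sub, abs_mul, abs_of_pos (inv_pos.2 hh),
        Real.mul_rpow (by positivity) (by positivity), Real.inv_rpow hh.le]
      congr 3; ring
    rw [e3] at e
    calc _ ≤ h ^ (β - k) * |s| * (2 * M * ((h ^ (β - k))⁻¹ * |x - y| ^ (β - k))) := by gcongr
      _ = 2 * (|s| * M) * |x - y| ^ (β - k) := by
        have : h ^ (β - k) ≠ 0 := by positivity
        field_simp
  unfold holderNorm
  rw [← hk]
  refine (add_le_add (Finset.sum_le_sum hA) hB).trans ?_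
  rw [Finset.sum_const, Finset.card_range, ← ENNReal.ofReal_nsmul,
    ← ENNReal.ofReal_add (by positivity) (by positivity)]
  refine ENNReal.ofReal_le_ofReal ?_
  rw [nsmul_eq_mul]
  push_cast
  linarith

lemma sqrt_ineq (p q δ : ℝ) (hp : 0 ≤ p) (hq : 0 ≤ q) (hδ : 0 < δ) :
    (p + q) * (1 - δ / 2) - 2 / δ * min p q ≤ (√p - √q) ^ 2 := by
  have h0 : √p * √q ≤ δ / 4 * (p + q) + min p q / δ := by
    rw [← Real.sqrt_mul hp, ← min_mul_max p q]
    refine Real.sqrt_le_iff.2 ⟨?_, ?_⟩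
    · have : 0 ≤ min p q := le_min hp hq
      positivity
    · have h1 : max p q ≤ p + q := max_le (by linarith) (by linarith)
      have h2 : 0 ≤ min p q := le_min hp hq
      have h3 : 4 * (δ / 4 * (p + q)) * (min p q / δ) = min p q * (p + q) := by
        field_simp
      nlinarith [sq_nonneg (δ / 4 * (p + q) - min p q / δ), mul_le_mul_of_nonneg_left h1 h2]
  have h4 : 2 / δ * min p q = 2 * (min p q / δ) := by ring
  nlinarith [Real.sq_sqrt hp, Real.sq_sqrt hq]

lemma mad_bound {Ω : Type*} [MeasurableSpace Ω] (P Q : Measure Ω) [IsProbabilityMeasure P]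
    [IsProbabilityMeasure Q] (T : Ω → ℝ) (hP : Integrable T P) (hQ : Integrable T Q)
    (δ a b : ℝ) (hδ : 0 < δ) (hH : sqHellinger P Q ≤ 1 - δ) :
    |a - b| * (δ ^ 2 / 2) ≤ ∫ ω, |T ω - a| ∂P + ∫ ω, |T ω - b| ∂Q := by
  set ν := P + Q with hν
  have hPν : P ≪ ν := Measure.absolutelyContinuous_of_le (Measure.le_add_right le_rfl)
  have hQν : Q ≪ ν := Measure.absolutelyContinuous_of_le (Measure.le_add_left le_rfl)
  set p : Ω → ℝ := fun ω => (P.rnDeriv ν ω).toReal with hp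
  set q : Ω → ℝ := fun ω => (Q.rnDeriv ν ω).toReal with hq
  have hp0 : ∀ ω, 0 ≤ p ω := fun ω => ENNReal.toReal_nonneg
  have hq0 : ∀ ω, 0 ≤ q ω := fun ω => ENNReal.toReal_nonneg
  have hpm : Measurable p := (Measure.measurable_rnDeriv P ν).ennreal_toReal
  have hqm : Measurable q := (Measure.measurable_rnDeriv Q ν).ennreal_toReal
  have hpi : Integrable p ν := Measure.integrable_toReal_rnDeriv
  have hqi : Integrable q ν := Measure.integrable_toReal_rnDeriv
  have hp1 : ∫ ω, p ω ∂ν = 1 := by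
    have := integral_rnDeriv_smul (f := fun _ => (1:ℝ)) hPν
    simpa using this
  have hq1 : ∫ ω, q ω ∂ν = 1 := by
    have := integral_rnDeriv_smul (f := fun _ => (1:ℝ)) hQν
    simpa using this
  have hmi : Integrable (fun ω => min (p ω) (q ω)) ν := hpi.inf hqi
  have hsi : Integrable (fun ω => (√(p ω) - √(q ω)) ^ 2) ν := by
    refine (hpi.add hqi).mono' (by fun_prop) (Filter.Eventually.of_forall fun ω => ?_)
    rw [Real.norm_eq_abs, abs_of_nonneg (sq_nonneg _)]
    simp only [Pi.add_apply]
    nlinarith [Real.sq_sqrt (hp0 ω), Real.sq_sqrt (hq0 ω),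
      mul_nonneg (Real.sqrt_nonneg (p ω)) (Real.sqrt_nonneg (q ω))]
  have hmin : δ ^ 2 / 2 ≤ ∫ ω, min (p ω) (q ω) ∂ν := by
    have h1 : ∫ ω, ((p ω + q ω) * (1 - δ / 2) - 2 / δ * min (p ω) (q ω)) ∂ν
        ≤ ∫ ω, (√(p ω) - √(q ω)) ^ 2 ∂ν :=
      integral_mono (((hpi.add hqi).mul_const _).sub (hmi.const_mul _)) hsi
        fun ω => sqrt_ineq _ _ _ (hp0 ω) (hq0 ω) hδ
    have h2 : sqHellinger P Q = 1 / 2 * ∫ ω, (√(p ω) - √(q ω)) ^ 2 ∂ν := rfl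
    have h3 : ∫ ω, ((p ω + q ω) * (1 - δ / 2) - 2 / δ * min (p ω) (q ω)) ∂ν
        = 2 * (1 - δ / 2) - 2 / δ * ∫ ω, min (p ω) (q ω) ∂ν := by
      have hpq : Integrable (fun ω => (p ω + q ω) * (1 - δ / 2)) ν := (hpi.add hqi).mul_const _
      rw [integral_sub hpq (hmi.const_mul _), integral_mul_const,
        integral_const_mul, integral_add hpi hqi, hp1, hq1]
      ring
    rw [h3] at h1
    have h4 : δ ≤ 2 / δ * ∫ ω, min (p ω) (q ω) ∂ν := by linarith
    have h5 := mul_le_mul_of_nonneg_left h4 (by positivity : 0 ≤ δ / 2)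
    have h6 : δ / 2 * (2 / δ * ∫ ω, min (p ω) (q ω) ∂ν) = ∫ ω, min (p ω) (q ω) ∂ν := by
      field_simp
    nlinarith
  have hTa : Integrable (fun ω => |T ω - a|) P := (hP.sub (integrable_const a)).abs
  have hTb : Integrable (fun ω => |T ω - b|) Q := (hQ.sub (integrable_const b)).abs
  have hia : Integrable (fun ω => p ω * |T ω - a|) ν := (integrable_rnDeriv_smul_iff hPν).2 hTa
  have hib : Integrable (fun ω => q ω * |T ω - b|) ν := (integrable_rnDeriv_smul_iff hQν).2 hTb
  have ea : ∫ ω, p ω * |T ω - a| ∂ν = ∫ ω, |T ω - a| ∂P :=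
    integral_rnDeriv_smul (f := fun ω => |T ω - a|) hPν
  have eb : ∫ ω, q ω * |T ω - b| ∂ν = ∫ ω, |T ω - b| ∂Q :=
    integral_rnDeriv_smul (f := fun ω => |T ω - b|) hQν
  rw [← ea, ← eb, ← integral_add hia hib]
  calc |a - b| * (δ ^ 2 / 2) ≤ |a - b| * ∫ ω, min (p ω) (q ω) ∂ν := by gcongr
    _ = ∫ ω, |a - b| * min (p ω) (q ω) ∂ν := by rw [integral_const_mul]
    _ ≤ _ := by
      refine integral_mono (hmi.const_mul _) (hia.add hib) fun ω => ?_
      have h1 : |a - b| ≤ |T ω - a| + |T ω - b| := by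
        rw [abs_sub_comm (T ω) a]
        exact abs_sub_le a (T ω) b
      have h2 : 0 ≤ min (p ω) (q ω) := le_min (hp0 ω) (hq0 ω)
      have h3 := mul_le_mul_of_nonneg_right (min_le_left (p ω) (q ω)) (abs_nonneg (T ω - a))
      have h4 := mul_le_mul_of_nonneg_right (min_le_right (p ω) (q ω)) (abs_nonneg (T ω - b))
      have h5 := mul_le_mul_of_nonneg_right h1 h2
      simp only
      linarith

lemma l2_bound (φ : ℝ → ℝ) (hφ : Continuous φ) (hs : HasCompactSupport φ) (a h x₀ : ℝ)
    (hh : 0 < h) :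
    ∫ x in Set.Icc (0:ℝ) 1, (a * φ (h⁻¹ * (x - x₀))) ^ 2 ≤ a ^ 2 * h * ∫ x, φ x ^ 2 := by
  have hi : Integrable (fun x => φ x ^ 2) := by
    have h2 : HasCompactSupport (φ * φ) := hs.mul_left
    have h3 := (hφ.mul hφ).integrable_of_hasCompactSupport (μ := volume) h2
    refine h3.congr (Filter.Eventually.of_forall fun x => ?_)
    simp [pow_two]
  have hi2 : Integrable (fun x => φ (h⁻¹ * (x - x₀)) ^ 2) :=
    (hi.comp_mul_left' (inv_ne_zero hh.ne')).comp_sub_right x₀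
  have e : ∫ x, φ (h⁻¹ * (x - x₀)) ^ 2 = h * ∫ x, φ x ^ 2 := by
    rw [integral_sub_right_eq_self (fun x => φ (h⁻¹ * x) ^ 2) x₀,
      Measure.integral_comp_mul_left (fun x => φ x ^ 2) h⁻¹]
    simp [abs_of_pos hh]
  simp_rw [mul_pow]
  calc _ ≤ ∫ x, a ^ 2 * φ (h⁻¹ * (x - x₀)) ^ 2 :=
        setIntegral_le_integral (hi2.const_mul _)
          (Filter.Eventually.of_forall fun x => by positivity)
    _ = _ := by rw [integral_const_mul, e]; ring

/- The suprema over the Hölder ball in the hypothesis and the conclusion are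
formalized pointwise resp. existentially. -/
theorem stmt13 (β R C : ℝ) (hβ : 0 < β) (hR : 0 < R) (hC : 0 < C) :
    ∃ c N : ℝ, 0 < c ∧ 0 < N ∧
      ∀ (n : ℝ), N ≤ n →
        ∀ x₀ ∈ Set.Icc (0:ℝ) 1,
          ∀ (Ω : Type) (_ : MeasurableSpace Ω) (P : (ℝ → ℝ) → Measure Ω),
            (∀ f ∈ holderBall β R, IsProbabilityMeasure (P f)) →
            (∀ f ∈ holderBall β R, ∀ g ∈ holderBall β R,
              sqHellinger (P f) (P g)
                = 1 - Real.exp (-(n / 8) * ∫ x in Set.Icc (0:ℝ) 1, (f x - g x) ^ 2)) →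
            ∀ T : Ω → ℝ, Measurable T →
              (∀ f ∈ holderBall β R, Integrable T (P f)) →
              (∀ f ∈ holderBall β R,
                |(∫ ω, T ω ∂(P f)) - f x₀| < (C / n) ^ (β / (2 * β + 1))) →
              ∃ f ∈ holderBall β R,
                c * n ^ (-(β / (2 * β + 1))) ≤ ∫ ω, |T ω - ∫ x, T x ∂(P f)| ∂(P f) := by
  obtain ⟨φ, hφ, hs, hφ0⟩ : ∃ φ : ℝ → ℝ, ContDiff ℝ (⊤ : ℕ∞) φ ∧ HasCompactSupport φ ∧ φ 0 = 1 := by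
    let b : ContDiffBump (0:ℝ) := ⟨1, 2, by norm_num, by norm_num⟩
    exact ⟨b, b.contDiff, b.hasCompactSupport, b.one_of_mem_closedBall (by simp [b])⟩
  obtain ⟨ε, hε, hball⟩ := mem_ball β R hβ hR φ hφ hs
  set r : ℝ := β / (2 * β + 1) with hr
  have hr0 : 0 < r := by positivity
  set I : ℝ := ∫ x, φ x ^ 2 with hI
  have hI0 : 0 ≤ I := integral_nonneg fun x => sq_nonneg _
  set A : ℝ := C * (4 / ε) ^ (1 / r) with hA
  have hA0 : 0 < A := by positivity
  set δ : ℝ := Real.exp (-(1 / 8) * (ε ^ 2 * A * I)) with hδ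
  have hδ0 : 0 < δ := Real.exp_pos _
  refine ⟨C ^ r * δ ^ 2 / 2, A, by positivity, hA0, ?_⟩
  intro n hn x₀ hx₀ Ω _ P hP hH T hT hTi hbias
  have hn0 : 0 < n := hA0.trans_le hn
  set h : ℝ := (A / n) ^ (1 / (2 * β + 1)) with hh
  have hh0 : 0 < h := by positivity
  have hh1 : h ≤ 1 := Real.rpow_le_one (by positivity) ((div_le_one hn0).2 hn) (by positivity)
  have hf := hball ε (abs_of_pos hε).le h hh0 hh1 x₀
  have hg := hball 0 (by simpa using hε.le) h hh0 hh1 x₀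
  set f : ℝ → ℝ := fun x => (h ^ β * ε) * φ (h⁻¹ * (x - x₀)) with hfdef
  set g : ℝ → ℝ := fun x => (h ^ β * 0) * φ (h⁻¹ * (x - x₀)) with hgdef
  have hhβ : h ^ β = (A / n) ^ r := by
    rw [hh, ← Real.rpow_mul (by positivity)]; congr 1; rw [hr]; ring
  have hB : (C / n) ^ r = C ^ r * n ^ (-r) := by
    rw [Real.div_rpow hC.le hn0.le, Real.rpow_neg hn0.le]; rfl
  have hfx : f x₀ = 4 * (C / n) ^ r := by
    have : A / n = (C / n) * (4 / ε) ^ (1 / r) := by rw [hA]; ring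
    simp only [hfdef, sub_self, mul_zero, hφ0, mul_one]
    rw [hhβ, this, Real.mul_rpow (by positivity) (by positivity), ← Real.rpow_mul (by positivity),
      one_div_mul_cancel hr0.ne', Real.rpow_one]
    field_simp
  have hgx : g x₀ = 0 := by simp [hgdef]
  have hnh : n * ((h ^ β) ^ 2 * h) = A := by
    have e1 : (h ^ β) ^ 2 * h = h ^ (2 * β + 1) := by
      rw [Real.rpow_add hh0, Real.rpow_one, mul_comm 2 β, Real.rpow_mul hh0.le]
      norm_cast
    rw [e1, hh, ← Real.rpow_mul (by positivity), one_div_mul_cancel (by positivity), Real.rpow_one]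
    field_simp
  have hL : ∫ x in Set.Icc (0:ℝ) 1, (f x - g x) ^ 2 ≤ (h ^ β * ε) ^ 2 * h * I := by
    have := l2_bound φ hφ.continuous hs (h ^ β * ε) h x₀ hh0
    simpa [hfdef, hgdef] using this
  have := hP f hf
  have := hP g hg
  have hHle : sqHellinger (P f) (P g) ≤ 1 - δ := by
    rw [hH f hf g hg]
    have : δ ≤ Real.exp (-(n / 8) * ∫ x in Set.Icc (0:ℝ) 1, (f x - g x) ^ 2) := by
      rw [hδ]
      refine Real.exp_le_exp.2 ?_
      have h1 := mul_le_mul_of_nonneg_left hL hn0.le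
      have h2 : n * ((h ^ β * ε) ^ 2 * h * I) = ε ^ 2 * A * I := by
        rw [← hnh]; ring
      linarith
    linarith
  have hmad := mad_bound (P f) (P g) T (hTi f hf) (hTi g hg) δ (∫ ω, T ω ∂(P f))
    (∫ ω, T ω ∂(P g)) hδ0 hHle
  have b1 := abs_lt.1 (hbias f hf)
  have b2 := abs_lt.1 (hbias g hg)
  rw [hfx] at b1
  rw [hgx] at b2
  have hgap : 2 * (C / n) ^ r ≤ |∫ ω, T ω ∂(P f) - ∫ ω, T ω ∂(P g)| :=
    le_trans (by linarith [b1.1, b2.2]) (le_abs_self _)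
  have hfin : (C / n) ^ r * δ ^ 2
      ≤ ∫ ω, |T ω - ∫ x, T x ∂(P f)| ∂(P f) + ∫ ω, |T ω - ∫ x, T x ∂(P g)| ∂(P g) := by
    refine le_trans ?_ hmad
    have := mul_le_mul_of_nonneg_right hgap (by positivity : 0 ≤ δ ^ 2 / 2)
    linarith
  have hc : C ^ r * δ ^ 2 / 2 * n ^ (-r) = (C / n) ^ r * δ ^ 2 / 2 := by rw [hB]; ring
  rw [hc]
  by_contra hcon
  push Not at hcon
  have c1 := hcon f hf
  have c2 := hcon g hg
  linarith
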